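/- arXiv:1102.2353 — 9 statements merged into one kernel-verified Lean document; each statement's English description precedes it below -/
import Mathlib

section
/- Let D be a cone metric on X and d the induced real-valued function d(x,y) = inf{‖u‖ : u ∈ E, D(x,y) ≤ u}. Then d satisfies the triangle inequality: d(x,y) ≤ d(x,z) + d(z,y) for all x,y,z ∈ X. -/
/-!
If `D x z ≤ u` and `D z y ≤ v`, then `D x y ≤ D x z + D z y ≤ u + v`, so
`d(x,y) ≤ ‖u + v‖ ≤ ‖u‖ + ‖v‖`; taking infima over `u` and `v` gives the claim. Each set of
norms is nonempty (take `u = D x y`, as `0 ∈ P`) and bounded below by `0`, so the real infima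
are genuine.
-/

open Filter Topology

/-- A cone in a real Banach space `E`. -/
structure IsCone (E : Type*) [NormedAddCommGroup E] [NormedSpace ℝ E] (P : Set E) : Prop where
  closed : IsClosed P
  nonempty : P.Nonempty
  ne_singleton_zero : P ≠ {0}
  combo_mem : ∀ a b : ℝ, 0 ≤ a → 0 ≤ b → ∀ x y : E, x ∈ P → y ∈ P → a • x + b • y ∈ P
  eq_zero_of_mem_of_neg_mem : ∀ x : E, x ∈ P → -x ∈ P → x = 0

/-- `x ≤ y` with respect to the cone `P`, i.e. `y - x ∈ P`. -/
def coneLe {E : Type*} [NormedAddCommGroup E] (P : Set E) (x y : E) : Prop :=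
  y - x ∈ P

/-- `x ≪ y` with respect to the cone `P`, i.e. `y - x ∈ interior P`. -/
def coneLt {E : Type*} [NormedAddCommGroup E] (P : Set E) (x y : E) : Prop :=
  y - x ∈ interior P

/-- `D : X × X → E` is a cone metric with respect to the cone `P`. -/
structure IsConeMetric {E : Type*} [NormedAddCommGroup E] (P : Set E)
    {X : Type*} (D : X → X → E) : Prop where
  nonneg : ∀ x y : X, coneLe P 0 (D x y)
  eq_zero_iff : ∀ x y : X, (D x y = 0 ↔ x = y)
  symm : ∀ x y : X, D x y = D y x
  triangle : ∀ x y z : X, coneLe P (D x y) (D x z + D z y)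

/-- The induced real-valued function `d(x,y) = inf {‖u‖ : D x y ≤ u}`. -/
noncomputable def inducedDist {E : Type*} [NormedAddCommGroup E] (P : Set E)
    {X : Type*} (D : X → X → E) (x y : X) : ℝ :=
  sInf {r : ℝ | ∃ u : E, r = ‖u‖ ∧ coneLe P (D x y) u}

theorem stmt1 {E X : Type*} [NormedAddCommGroup E] [NormedSpace ℝ E] [CompleteSpace E]
    [Nonempty X] (P : Set E) (hP : IsCone E P) (hPint : (interior P).Nonempty)
    (D : X → X → E) (hD : IsConeMetric P D) (x y z : X) :
    inducedDist P D x y ≤ inducedDist P D x z + inducedDist P D z y := by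
  have h_add : ∀ p ∈ P, ∀ q ∈ P, p + q ∈ P := fun p hp q hq => by
    simpa using hP.combo_mem 1 1 zero_le_one zero_le_one p q hp hq
  have h_zero : (0 : E) ∈ P := by
    obtain ⟨p, hp⟩ := hP.nonempty
    simpa using hP.combo_mem 0 0 le_rfl le_rfl p p hp hp
  have h_ne : ∀ a b : X, {r : ℝ | ∃ u : E, r = ‖u‖ ∧ coneLe P (D a b) u}.Nonempty :=
    fun a b => ⟨‖D a b‖, D a b, rfl, by simpa [coneLe] using h_zero⟩
  have h_le : ∀ u v : E, coneLe P (D x z) u → coneLe P (D z y) v →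
      inducedDist P D x y ≤ ‖u‖ + ‖v‖ := by
    intro u v hu hv
    refine le_trans (csInf_le ⟨0, ?_⟩ ⟨u + v, rfl, ?_⟩) (norm_add_le u v)
    · rintro _ ⟨w, rfl, -⟩
      exact norm_nonneg w
    · have h := h_add _ (h_add _ hu _ hv) _ (hD.triangle x y z)
      unfold coneLe
      convert h using 1
      abel
  rw [← sub_le_iff_le_add]
  refine le_csInf (h_ne x z) ?_
  rintro _ ⟨u, rfl, hu⟩
  rw [sub_le_comm]
  refine le_csInf (h_ne z y) ?_
  rintro _ ⟨v, rfl, hv⟩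
  rw [sub_le_iff_le_add']
  exact h_le u v hu hv
end

section
/- Let D be a cone metric on X and d the induced real-valued function d(x,y) = inf{‖u‖ : u ∈ E, D(x,y) ≤ u}. Then d is a metric on X: d(x,y) ≥ 0 with equality iff x = y, d(x,y) = d(y,x), and d(x,y) ≤ d(x,z) + d(z,y) for all x,y,z ∈ X. -/
/-!
The set `{‖u‖ : D x y ≤ u}` is nonempty (it contains `‖D x y‖`, as `0 ∈ P`) and bounded below by `0`,
so the infimum is a genuine one. Adding majorants of `D x z` and `D z y` gives a majorant of `D x y`,
whence the triangle inequality. If the infimum vanishes, there are majorants `u` of `D x y` of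
arbitrarily small norm, so the points `u - D x y ∈ P` approach `-D x y`; as `P` is closed,
`-D x y ∈ P`, and pointedness of `P` forces `D x y = 0`.
-/

open Filter Topology

section Helpers

variable {E X : Type*} [NormedAddCommGroup E] {P : Set E} {D : X → X → E}

lemma IsCone.zero_mem [NormedSpace ℝ E] (hP : IsCone E P) : (0 : E) ∈ P := by
  obtain ⟨p, hp⟩ := hP.nonempty
  simpa using hP.combo_mem 0 0 le_rfl le_rfl p p hp hp

lemma IsCone.add_mem [NormedSpace ℝ E] (hP : IsCone E P) {x y : E} (hx : x ∈ P) (hy : y ∈ P) : x + y ∈ P := by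
  simpa using hP.combo_mem 1 1 zero_le_one zero_le_one x y hx hy

lemma inducedDist_nonneg (x y : X) : 0 ≤ inducedDist P D x y := by
  apply Real.sInf_nonneg
  rintro r ⟨u, rfl, -⟩
  exact norm_nonneg u

lemma inducedDist_le_norm {x y : X} {u : E} (hu : coneLe P (D x y) u) :
    inducedDist P D x y ≤ ‖u‖ := by
  refine csInf_le ⟨0, ?_⟩ ⟨u, rfl, hu⟩
  rintro r ⟨v, rfl, -⟩
  exact norm_nonneg v

lemma exists_norm_lt_of_inducedDist_lt [NormedSpace ℝ E] (hP : IsCone E P) {x y : X} {r : ℝ}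
    (h : inducedDist P D x y < r) : ∃ u : E, coneLe P (D x y) u ∧ ‖u‖ < r := by
  have hne : {r : ℝ | ∃ u : E, r = ‖u‖ ∧ coneLe P (D x y) u}.Nonempty :=
    ⟨‖D x y‖, D x y, rfl, by simpa [coneLe] using hP.zero_mem⟩
  obtain ⟨_, ⟨u, rfl, hu⟩, hlt⟩ := exists_lt_of_csInf_lt hne h
  exact ⟨u, hu, hlt⟩

end Helpers

theorem stmt2 {E X : Type*} [NormedAddCommGroup E] [NormedSpace ℝ E] [CompleteSpace E]
    [Nonempty X] (P : Set E) (hP : IsCone E P) (hPint : (interior P).Nonempty)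
    (D : X → X → E) (hD : IsConeMetric P D) :
    (∀ x y : X, 0 ≤ inducedDist P D x y) ∧
    (∀ x y : X, (inducedDist P D x y = 0 ↔ x = y)) ∧
    (∀ x y : X, inducedDist P D x y = inducedDist P D y x) ∧
    (∀ x y z : X, inducedDist P D x y ≤ inducedDist P D x z + inducedDist P D z y) := by
  refine ⟨inducedDist_nonneg, fun x y => ⟨fun h => ?_, ?_⟩, fun x y => ?_, fun x y z => ?_⟩
  · rw [← hD.eq_zero_iff]
    refine hP.eq_zero_of_mem_of_neg_mem _ (by simpa [coneLe] using hD.nonneg x y) ?_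
    rw [← hP.closed.closure_eq, Metric.mem_closure_iff]
    intro ε hε
    obtain ⟨u, hu, hlt⟩ := exists_norm_lt_of_inducedDist_lt hP (h.trans_lt hε)
    refine ⟨u - D x y, hu, ?_⟩
    rw [dist_eq_norm, show -D x y - (u - D x y) = -u by abel, norm_neg]
    exact hlt
  · rintro rfl
    refine le_antisymm ?_ (inducedDist_nonneg x x)
    have h0 : coneLe P (D x x) 0 := by
      simpa [coneLe, (hD.eq_zero_iff x x).2 rfl] using hP.zero_mem
    simpa using inducedDist_le_norm h0
  · simp only [inducedDist, hD.symm x y]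
  · refine le_of_forall_pos_lt_add fun ε hε => ?_
    obtain ⟨u, hu, hu'⟩ := exists_norm_lt_of_inducedDist_lt (D := D) (x := x) (y := z) hP
      (lt_add_of_pos_right _ (half_pos hε))
    obtain ⟨v, hv, hv'⟩ := exists_norm_lt_of_inducedDist_lt (D := D) (x := z) (y := y) hP
      (lt_add_of_pos_right _ (half_pos hε))
    have huv : coneLe P (D x y) (u + v) := by
      have := hP.add_mem (hP.add_mem hu hv) (hD.triangle x y z)
      rwa [show u - D x z + (v - D z y) + (D x z + D z y - D x y) = u + v - D x y by abel] at this
    linarith [inducedDist_le_norm huv, norm_add_le u v]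
end

section
/- Let D be a cone metric on X, d the induced real-valued function, (x_n) a sequence in X and x ∈ X. If d(x_n, x) → 0 as n → ∞, then (x_n) converges to x in the cone metric sense: for every c ∈ E with 0 ≪ c there exists N ∈ ℕ such that D(x_n, x) ≪ c for all n ≥ N. -/
/-!
If a ball of radius `ε` about `c` lies in the interior of `P` and `d(x_n, x) < ε`, then some
`u ≥ D(x_n, x)` has `‖u‖ < ε`, so `c - u` is interior to `P`. Since `interior P + P ⊆ interior P`
(`add_mem_interior`), `c - D(x_n, x) = (c - u) + (u - D(x_n, x))` is interior as well.
-/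

open Filter Topology

/-- A translate of `interior P` by an element of `P` is an open subset of `P`. -/
theorem add_mem_interior {E : Type*} [NormedAddCommGroup E] [NormedSpace ℝ E] {P : Set E}
    (hP : IsCone E P) {a b : E} (ha : a ∈ interior P) (hb : b ∈ P) : a + b ∈ interior P := by
  refine mem_interior.mpr ⟨(fun y => y - b) ⁻¹' interior P, fun y hy => ?_,
    isOpen_interior.preimage (by fun_prop), by simpa using ha⟩
  simpa using hP.combo_mem 1 1 zero_le_one zero_le_one _ _ (interior_subset hy) hb

theorem stmt3 {E X : Type*} [NormedAddCommGroup E] [NormedSpace ℝ E] [CompleteSpace E]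
    [Nonempty X] (P : Set E) (hP : IsCone E P) (hPint : (interior P).Nonempty)
    (D : X → X → E) (hD : IsConeMetric P D) (s : ℕ → X) (x : X)
    (h : Tendsto (fun n => inducedDist P D (s n) x) atTop (𝓝 0)) :
    ∀ c : E, coneLt P 0 c → ∃ N : ℕ, ∀ n ≥ N, coneLt P (D (s n) x) c := by
  intro c hc
  obtain ⟨ε, hε, hball⟩ := Metric.isOpen_iff.mp isOpen_interior c
    (by simpa [coneLt] using hc)
  obtain ⟨N, hN⟩ := eventually_atTop.mp (h.eventually_lt_const hε)
  refine ⟨N, fun n hn => ?_⟩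
  -- `D (s n) x` bounds itself, so the infimum is over a nonempty set and is not a junk value.
  have hne : {r : ℝ | ∃ u : E, r = ‖u‖ ∧ coneLe P (D (s n) x) u}.Nonempty := by
    obtain ⟨p, hp⟩ := hP.nonempty
    refine ⟨_, D (s n) x, rfl, ?_⟩
    simpa [coneLe] using hP.combo_mem 0 0 le_rfl le_rfl p p hp hp
  obtain ⟨_, ⟨u, rfl, hu⟩, huε⟩ := exists_lt_of_csInf_lt hne (hN n hn)
  have hcu : c - u ∈ interior P := hball (by simpa [Metric.mem_ball, dist_eq_norm] using huε)
  have hsum := add_mem_interior hP hcu hu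
  rwa [sub_add_sub_cancel] at hsum
end

section
/- Let D be a cone metric on X, d the induced real-valued function, T : X → X a self map, and φ : P → P a bounded map, i.e. ‖φ‖ := sup{‖φ(x)‖/‖x‖ : x ∈ P, x ≠ 0} < ∞. Define ψ : ℝ⁺ → ℝ⁺ by ψ(t) := sup{‖φ((t/‖x‖)·x)‖ : x ∈ P, x ≠ 0}. If D(Tx,Ty) ≤ φ(D(x,y)) for all x,y ∈ X, then d(Tx,Ty) ≤ ψ(‖D(x,y)‖) for all x,y ∈ X. -/
/-!
If `D x y ≠ 0`, then `φ (D x y)` is an upper bound of `D (T x) (T y)`, so `d (T x) (T y) ≤ ‖φ (D x y)‖`,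
and taking `u = D x y` in the supremum defining `ψ ‖D x y‖` shows that this norm is at most
`ψ ‖D x y‖`. Boundedness of `φ` makes the supremum finite: every rescaled vector has norm `‖D x y‖`.
If `D x y = 0`, then `x = y` and both sides are handled directly: the left is at most `0`,
the right is a supremum of norms.
-/

open Filter Topology

theorem stmt7 {E X : Type*} [NormedAddCommGroup E] [NormedSpace ℝ E] [CompleteSpace E]
    [Nonempty X] (P : Set E) (hP : IsCone E P) (hPint : (interior P).Nonempty)
    (D : X → X → E) (hD : IsConeMetric P D) (T : X → X) (φ : E → E)
    (hφmem : ∀ u ∈ P, φ u ∈ P)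
    (hφbdd : BddAbove {r : ℝ | ∃ u ∈ P, u ≠ 0 ∧ r = ‖φ u‖ / ‖u‖})
    (ψ : ℝ → ℝ)
    (hψ : ∀ t : ℝ, 0 ≤ t → ψ t = sSup {r : ℝ | ∃ u ∈ P, u ≠ 0 ∧ r = ‖φ ((t / ‖u‖) • u)‖})
    (hcontr : ∀ x y : X, coneLe P (D (T x) (T y)) (φ (D x y))) :
    ∀ x y : X, inducedDist P D (T x) (T y) ≤ ψ ‖D x y‖ := by
  intro x y
  have hd : ∀ u, coneLe P (D (T x) (T y)) u → inducedDist P D (T x) (T y) ≤ ‖u‖ := by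
    intro u hu
    refine csInf_le ⟨0, ?_⟩ ⟨u, rfl, hu⟩
    rintro _ ⟨v, rfl, -⟩
    exact norm_nonneg v
  rw [hψ _ (norm_nonneg _)]
  by_cases h0 : D x y = 0
  · -- Here `D x y` is not admissible in the supremum, but `u = 0` already bounds `D (T x) (T y)`.
    have hxy : x = y := (hD.eq_zero_iff x y).1 h0
    have hT : D (T x) (T y) = 0 := (hD.eq_zero_iff _ _).2 (by rw [hxy])
    have hle : coneLe P (D (T x) (T y)) 0 := by
      have := hD.nonneg (T x) (T y)
      rw [hT] at this ⊢
      exact this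
    refine (hd 0 hle).trans ?_
    rw [norm_zero]
    refine Real.sSup_nonneg ?_
    rintro _ ⟨u, -, -, rfl⟩
    exact norm_nonneg _
  · have hmem : D x y ∈ P := by simpa [coneLe] using hD.nonneg x y
    have ht : 0 < ‖D x y‖ := norm_pos_iff.2 h0
    refine (hd _ (hcontr x y)).trans (le_csSup ?_ ⟨D x y, hmem, h0, ?_⟩)
    · obtain ⟨M, hM⟩ := hφbdd
      refine ⟨M * ‖D x y‖, ?_⟩
      rintro _ ⟨u, hu, hu0, rfl⟩
      have hun : 0 < ‖u‖ := norm_pos_iff.2 hu0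
      have hc : 0 < ‖D x y‖ / ‖u‖ := div_pos ht hun
      have hv : (‖D x y‖ / ‖u‖) • u ∈ P := by
        simpa using hP.combo_mem _ 0 hc.le le_rfl u u hu hu
      have hnorm : ‖(‖D x y‖ / ‖u‖) • u‖ = ‖D x y‖ := by
        rw [norm_smul, Real.norm_of_nonneg hc.le, div_mul_cancel₀ _ hun.ne']
      have hb := hM ⟨_, hv, smul_ne_zero hc.ne' hu0, rfl⟩
      rwa [hnorm, div_le_iff₀ ht] at hb
    · rw [div_self ht.ne', one_smul]
end

section
/- Let D be a cone metric on X, d the induced real-valued function, T : X → X a self map, and φ : P → P a bounded map (‖φ‖ := sup{‖φ(x)‖/‖x‖ : x ∈ P, x ≠ 0} < ∞) which is the restriction of a linear map on E and is increasing with respect to the cone order (x ≤ y implies φ(x) ≤ φ(y)). If D(Tx,Ty) ≤ φ(D(x,y)) for all x,y ∈ X, then d(Tx,Ty) ≤ ‖φ‖ · d(x,y) for all x,y ∈ X. -/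
/-!
If `D x y ≤ u`, then `u ∈ P` because `D x y ∈ P`, so monotonicity and the contraction hypothesis
give `D (T x) (T y) ≤ φ (D x y) ≤ φ u`. Hence `d (T x) (T y) ≤ ‖φ u‖ ≤ ‖φ‖ * ‖u‖`, and the claim
follows by taking the infimum over all such `u`.
-/

open Filter Topology

theorem stmt9 {E X : Type*} [NormedAddCommGroup E] [NormedSpace ℝ E] [CompleteSpace E]
    [Nonempty X] (P : Set E) (hP : IsCone E P) (hPint : (interior P).Nonempty)
    (D : X → X → E) (hD : IsConeMetric P D) (T : X → X) (φ : E → E)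
    (hφmem : ∀ u ∈ P, φ u ∈ P)
    (hφbdd : BddAbove {r : ℝ | ∃ u ∈ P, u ≠ 0 ∧ r = ‖φ u‖ / ‖u‖})
    (hφlin : ∃ L : E →ₗ[ℝ] E, ∀ u ∈ P, φ u = L u)
    (hφmono : ∀ u v : E, u ∈ P → v ∈ P → coneLe P u v → coneLe P (φ u) (φ v))
    (hcontr : ∀ x y : X, coneLe P (D (T x) (T y)) (φ (D x y))) :
    ∀ x y : X, inducedDist P D (T x) (T y) ≤
      sSup {r : ℝ | ∃ u ∈ P, u ≠ 0 ∧ r = ‖φ u‖ / ‖u‖} * inducedDist P D x y := by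
  intro x y
  set K := sSup {r : ℝ | ∃ u ∈ P, u ≠ 0 ∧ r = ‖φ u‖ / ‖u‖} with hK
  have hadd : ∀ u v : E, u ∈ P → v ∈ P → u + v ∈ P := fun u v hu hv => by
    simpa using hP.combo_mem 1 1 zero_le_one zero_le_one u v hu hv
  have hDmem : D x y ∈ P := by simpa [coneLe] using hD.nonneg x y
  have hK0 : 0 ≤ K := by
    apply Real.sSup_nonneg
    rintro r ⟨u, -, -, rfl⟩
    positivity
  have hnorm : ∀ u ∈ P, ‖φ u‖ ≤ K * ‖u‖ := by
    intro u hu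
    by_cases h0 : u = 0
    · -- The supremum says nothing about `u = 0`; there linearity gives `φ 0 = 0`.
      obtain ⟨L, hL⟩ := hφlin
      rw [hL u hu, h0]
      simp
    · exact (div_le_iff₀ (norm_pos_iff.mpr h0)).mp (le_csSup hφbdd ⟨u, hu, h0, rfl⟩)
  have hkey : ∀ u : E, coneLe P (D x y) u → inducedDist P D (T x) (T y) ≤ K * ‖u‖ := by
    intro u hu
    have huP : u ∈ P := by simpa using hadd _ _ hu hDmem
    have hle : coneLe P (D (T x) (T y)) (φ u) := by
      simpa [coneLe] using hadd _ _ (hφmono _ _ hDmem huP hu) (hcontr x y)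
    refine le_trans (csInf_le ⟨0, ?_⟩ ⟨φ u, rfl, hle⟩) (hnorm u huP)
    rintro r ⟨v, rfl, -⟩
    exact norm_nonneg v
  have hrefl : coneLe P (D x y) (D x y) := by
    simpa [coneLe] using hP.combo_mem 0 0 le_rfl le_rfl _ _ hDmem hDmem
  rcases hK0.eq_or_lt with h0 | hpos
  · simpa [← h0] using hkey _ hrefl
  · rw [← div_le_iff₀' hpos]
    refine le_csInf ⟨_, D x y, rfl, hrefl⟩ ?_
    rintro r ⟨u, rfl, hu⟩
    exact (div_le_iff₀' hpos).mpr (hkey u hu)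
end

section
/- Let D be a cone metric on X, d the induced real-valued function, T : X → X a map, α ∈ [0,1), and x,y ∈ X. If D(Tx,Ty) ≤ α·D(x,y), then d(Tx,Ty) ≤ α·d(x,y). -/
/-!
If `D x y ≤ u`, then `D (T x) (T y) ≤ α • D x y ≤ α • u`, and `‖α • u‖ = α * ‖u‖`. Hence every
element of `α • S`, where `S` is the set whose infimum is `d (x, y)`, belongs to the set whose
infimum is `d (T x, T y)`; since `S` is nonempty, passing to infima gives the claim.
-/

open Filter Topology

theorem stmt10 {E X : Type*} [NormedAddCommGroup E] [NormedSpace ℝ E] [CompleteSpace E]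
    [Nonempty X] (P : Set E) (hP : IsCone E P) (hPint : (interior P).Nonempty)
    (D : X → X → E) (hD : IsConeMetric P D) (T : X → X) (α : ℝ) (hα0 : 0 ≤ α) (hα1 : α < 1)
    (x y : X) (h : coneLe P (D (T x) (T y)) (α • D x y)) :
    inducedDist P D (T x) (T y) ≤ α * inducedDist P D x y := by
  unfold inducedDist
  rw [← smul_eq_mul, ← Real.sInf_smul_of_nonneg hα0]
  -- The set defining `d (x, y)` contains `‖D x y‖`, as `0 ∈ P`.
  have hne : {r : ℝ | ∃ u : E, r = ‖u‖ ∧ coneLe P (D x y) u}.Nonempty := by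
    obtain ⟨p, hp⟩ := hP.nonempty
    refine ⟨_, D x y, rfl, ?_⟩
    simpa [coneLe] using hP.combo_mem 0 0 le_rfl le_rfl p p hp hp
  refine le_csInf hne.smul_set ?_
  rintro _ ⟨_, ⟨u, rfl, hu⟩, rfl⟩
  -- If `D x y ≤ u`, then `α • u` is an upper bound of `D (T x) (T y)` of norm `α * ‖u‖`.
  refine csInf_le ⟨0, ?_⟩ ⟨α • u, ?_, ?_⟩
  · rintro _ ⟨v, rfl, -⟩
    exact norm_nonneg v
  · simp [norm_smul, abs_of_nonneg hα0]
  · have key := hP.combo_mem α 1 hα0 zero_le_one _ _ hu h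
    have e : α • (u - D x y) + (1 : ℝ) • (α • D x y - D (T x) (T y))
        = α • u - D (T x) (T y) := by
      rw [one_smul, smul_sub]
      abel
    rwa [e] at key
end

section
/- Let D be a cone metric on X, d the induced real-valued function, T : X → X a map, λ ∈ [0,1/2), and x,y ∈ X. If D(Tx,Ty) ≤ λ·(D(Tx,y) + D(Ty,x)), then d(Tx,Ty) ≤ λ·(d(Tx,y) + d(Ty,x)). -/
/-! The cone order is compatible with addition and nonnegative scaling, so upper bounds `u` of
`D (T x) y` and `v` of `D (T y) x` give the upper bound `lam • (u + v)` of `D (T x) (T y)`, whose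
norm is at most `lam * (‖u‖ + ‖v‖)`. Choosing `u` and `v` with nearly minimal norm yields the
inequality between the infima. -/

open Filter Topology

lemma inducedDist_le {E X : Type*} [NormedAddCommGroup E] {P : Set E} {D : X → X → E} {x y : X}
    {u : E} (hu : coneLe P (D x y) u) : inducedDist P D x y ≤ ‖u‖ :=
  csInf_le ⟨0, by rintro r ⟨w, rfl, -⟩; exact norm_nonneg w⟩ ⟨u, rfl, hu⟩

/-- Reflexivity of the cone order (`0 ∈ P`) makes the set defining `inducedDist` nonempty, so its
infimum is approximated by norms of upper bounds. -/
lemma exists_norm_lt_inducedDist_add {E X : Type*} [NormedAddCommGroup E] {P : Set E}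
    (h0 : (0 : E) ∈ P) (D : X → X → E) (x y : X) {ε : ℝ} (hε : 0 < ε) :
    ∃ u : E, coneLe P (D x y) u ∧ ‖u‖ < inducedDist P D x y + ε := by
  have hne : {r : ℝ | ∃ u : E, r = ‖u‖ ∧ coneLe P (D x y) u}.Nonempty :=
    ⟨_, D x y, rfl, by simpa [coneLe] using h0⟩
  obtain ⟨r, ⟨u, rfl, hu⟩, hlt⟩ := exists_lt_of_csInf_lt hne (lt_add_of_pos_right _ hε)
  exact ⟨u, hu, hlt⟩

theorem stmt12 {E X : Type*} [NormedAddCommGroup E] [NormedSpace ℝ E] [CompleteSpace E]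
    [Nonempty X] (P : Set E) (hP : IsCone E P) (hPint : (interior P).Nonempty)
    (D : X → X → E) (hD : IsConeMetric P D) (T : X → X) (lam : ℝ) (hl0 : 0 ≤ lam) (hl1 : lam < 1 / 2)
    (x y : X) (h : coneLe P (D (T x) (T y)) (lam • (D (T x) y + D (T y) x))) :
    inducedDist P D (T x) (T y) ≤
      lam * (inducedDist P D (T x) y + inducedDist P D (T y) x) := by
  have h0 : (0 : E) ∈ P := by
    obtain ⟨p, hp⟩ := hP.nonempty
    simpa using hP.combo_mem 0 0 le_rfl le_rfl p p hp hp
  refine le_of_forall_pos_le_add fun ε hε => ?_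
  obtain ⟨u, hu, hun⟩ := exists_norm_lt_inducedDist_add h0 D (T x) y hε
  obtain ⟨v, hv, hvn⟩ := exists_norm_lt_inducedDist_add h0 D (T y) x hε
  have huv : coneLe P (D (T x) (T y)) (lam • (u + v)) := by
    have h1 := hP.combo_mem lam lam hl0 hl0 _ _ hu hv
    have h2 := hP.combo_mem 1 1 zero_le_one zero_le_one _ _ h h1
    unfold coneLe
    convert h2 using 1
    module
  calc inducedDist P D (T x) (T y) ≤ ‖lam • (u + v)‖ := inducedDist_le huv
    _ = lam * ‖u + v‖ := by rw [norm_smul, Real.norm_of_nonneg hl0]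
    _ ≤ lam * (‖u‖ + ‖v‖) := by gcongr; exact norm_add_le u v
    _ ≤ lam * ((inducedDist P D (T x) y + ε) + (inducedDist P D (T y) x + ε)) := by gcongr
    -- The error is `2 * lam * ε`, and `lam < 1 / 2`.
    _ ≤ lam * (inducedDist P D (T x) y + inducedDist P D (T y) x) + ε := by nlinarith
end

section
/- Let D be a cone metric on X, d the induced real-valued function, T : X → X a map, α, β ∈ [0,1), and x,y ∈ X. If D(Tx,Ty) ≤ α·D(x,y) + β·D(Tx,y), then d(Tx,Ty) ≤ α·d(x,y) + β·d(Tx,y). -/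
/-!
If `D x y ≤ u` and `D (T x) y ≤ v`, then `D (T x) (T y) ≤ α • u + β • v` because the cone order is
compatible with nonnegative linear combinations, so `d (T x) (T y) ≤ α * ‖u‖ + β * ‖v‖`. Choosing
`u` and `v` with norms arbitrarily close to the infima `d x y` and `d (T x) y` gives the claim.
No normality of the cone is involved, since `d` is an infimum over all upper bounds.
-/

open Filter Topology

theorem stmt13 {E X : Type*} [NormedAddCommGroup E] [NormedSpace ℝ E] [CompleteSpace E]
    [Nonempty X] (P : Set E) (hP : IsCone E P) (hPint : (interior P).Nonempty)
    (D : X → X → E) (hD : IsConeMetric P D) (T : X → X) (α β : ℝ)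
    (hα0 : 0 ≤ α) (hα1 : α < 1) (hβ0 : 0 ≤ β) (hβ1 : β < 1)
    (x y : X) (h : coneLe P (D (T x) (T y)) (α • D x y + β • D (T x) y)) :
    inducedDist P D (T x) (T y) ≤
      α * inducedDist P D x y + β * inducedDist P D (T x) y := by
  have hne : ∀ a b : X, {r : ℝ | ∃ u : E, r = ‖u‖ ∧ coneLe P (D a b) u}.Nonempty := by
    intro a b
    obtain ⟨p, hp⟩ := hP.nonempty
    refine ⟨_, D a b + p, rfl, ?_⟩
    simpa [coneLe] using hp
  refine le_of_forall_pos_le_add fun ε hε => ?_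
  obtain ⟨_, ⟨u, rfl, hu⟩, hur⟩ := Real.lt_sInf_add_pos (hne x y) (half_pos hε)
  obtain ⟨_, ⟨v, rfl, hv⟩, hvr⟩ := Real.lt_sInf_add_pos (hne (T x) y) (half_pos hε)
  change ‖u‖ < inducedDist P D x y + ε / 2 at hur
  change ‖v‖ < inducedDist P D (T x) y + ε / 2 at hvr
  have hw : coneLe P (D (T x) (T y)) (α • u + β • v) := by
    have h₁ := hP.combo_mem α β hα0 hβ0 _ _ hu hv
    have h₂ := hP.combo_mem 1 1 zero_le_one zero_le_one _ _ h₁ h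
    unfold coneLe
    convert h₂ using 1
    module
  have hle : inducedDist P D (T x) (T y) ≤ ‖α • u + β • v‖ :=
    csInf_le ⟨0, by rintro _ ⟨w, rfl, -⟩; exact norm_nonneg w⟩ ⟨_, rfl, hw⟩
  have hnorm : ‖α • u + β • v‖ ≤ α * ‖u‖ + β * ‖v‖ := by
    refine (norm_add_le _ _).trans_eq ?_
    rw [norm_smul, norm_smul, Real.norm_of_nonneg hα0, Real.norm_of_nonneg hβ0]
  have hα := mul_le_mul_of_nonneg_left hur.le hα0
  have hβ := mul_le_mul_of_nonneg_left hvr.le hβ0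
  -- The total error is `(α + β) * (ε / 2)`, which is at most `ε` since `α, β < 1`.
  nlinarith
end

section
/- Let D be a cone metric on X, d the induced real-valued function, T : X → X a map, β ∈ (0,1), and x,y ∈ X. If there exists u ∈ {D(x,y), D(x,Tx), D(y,Ty), (1/2)·D(x,Ty), (1/2)·D(y,Tx)} such that D(Tx,Ty) ≤ β·u, then d(Tx,Ty) ≤ β·max{d(x,y), d(x,Tx), d(y,Ty), (1/2)·d(x,Ty), (1/2)·d(y,Tx)}. -/
/-!
If `D a b ≤ c • D p q` with `c > 0`, then every upper bound `u` of `D p q` yields the upper bound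
`c • u` of `D a b`, whose norm is `c * ‖u‖`; taking infima gives `d a b ≤ c * d p q`
(`inducedDist_le_mul`). The theorem is this fact with `c = β` or `c = β / 2`, according to which
member of the five-element set dominates, followed by bounding that term by the maximum.
-/

open Filter Topology

theorem inducedDist_le_mul {E X : Type*} [NormedAddCommGroup E] [NormedSpace ℝ E]
    {P : Set E} (hP : IsCone E P) {D : X → X → E} {a b p q : X} {c : ℝ} (hc : 0 < c)
    (h : coneLe P (D a b) (c • D p q)) :
    inducedDist P D a b ≤ c * inducedDist P D p q := by
  rw [← div_le_iff₀' hc]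
  have hzero : (0 : E) ∈ P := by
    obtain ⟨z, hz⟩ := hP.nonempty
    simpa using hP.combo_mem 0 0 le_rfl le_rfl z z hz hz
  -- `D p q` bounds itself, so the infimum defining `inducedDist P D p q` is over a nonempty set.
  refine le_csInf ⟨‖D p q‖, D p q, rfl, by simpa [coneLe] using hzero⟩ ?_
  rintro r ⟨u, rfl, hu⟩
  rw [div_le_iff₀' hc]
  refine csInf_le ⟨0, ?_⟩ ⟨c • u, ?_, ?_⟩
  · rintro r ⟨v, rfl, -⟩
    exact norm_nonneg v
  · rw [norm_smul, Real.norm_of_nonneg hc.le]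
  · have hmem := hP.combo_mem c 1 hc.le zero_le_one _ _ hu h
    rwa [one_smul, smul_sub, sub_add_sub_cancel] at hmem

theorem stmt15 {E X : Type*} [NormedAddCommGroup E] [NormedSpace ℝ E] [CompleteSpace E]
    [Nonempty X] (P : Set E) (hP : IsCone E P) (hPint : (interior P).Nonempty)
    (D : X → X → E) (hD : IsConeMetric P D) (T : X → X) (β : ℝ) (hβ0 : 0 < β) (hβ1 : β < 1)
    (x y : X)
    (h : ∃ u ∈ ({D x y, D x (T x), D y (T y),
        (1 / 2 : ℝ) • D x (T y), (1 / 2 : ℝ) • D y (T x)} : Set E),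
      coneLe P (D (T x) (T y)) (β • u)) :
    inducedDist P D (T x) (T y) ≤
      β * max (max (inducedDist P D x y) (inducedDist P D x (T x)))
        (max (inducedDist P D y (T y))
          (max ((1 / 2) * inducedDist P D x (T y))
            ((1 / 2) * inducedDist P D y (T x)))) := by
  obtain ⟨u, hu, hle⟩ := h
  have hβ2 : 0 < β * (1 / 2) := by positivity
  simp only [Set.mem_insert_iff, Set.mem_singleton_iff] at hu
  rcases hu with rfl | rfl | rfl | rfl | rfl
  · refine (inducedDist_le_mul hP hβ0 hle).trans (mul_le_mul_of_nonneg_left ?_ hβ0.le)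
    simp only [le_max_iff, le_refl, true_or]
  · refine (inducedDist_le_mul hP hβ0 hle).trans (mul_le_mul_of_nonneg_left ?_ hβ0.le)
    simp only [le_max_iff, le_refl, true_or, or_true]
  · refine (inducedDist_le_mul hP hβ0 hle).trans (mul_le_mul_of_nonneg_left ?_ hβ0.le)
    simp only [le_max_iff, le_refl, true_or, or_true]
  · rw [smul_smul] at hle
    refine (inducedDist_le_mul hP hβ2 hle).trans ?_
    rw [mul_assoc]
    refine mul_le_mul_of_nonneg_left ?_ hβ0.le
    simp only [le_max_iff, le_refl, true_or, or_true]
  · rw [smul_smul] at hle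
    refine (inducedDist_le_mul hP hβ2 hle).trans ?_
    rw [mul_assoc]
    refine mul_le_mul_of_nonneg_left ?_ hβ0.le
    simp only [le_max_iff, le_refl, or_true]
end
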